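/- arXiv:1904.09429 — 3 statements merged into one kernel-verified Lean document; each statement's English description precedes it below -/
import Mathlib

section
/- Let (Ω, μ) be a probability space, w ≥ 1, N ≥ 1. Let Z : Ω → (Fin N → ZMod (2^w)) be a measurable random vector and let Δ : Fin N → Ω → ZMod (2^w) be measurable random variables such that the family consisting of Z together with all the Δ i (indexed over Option (Fin N), with none ↦ Z and some i ↦ Δ i) is jointly independent (ProbabilityTheory.iIndepFun), and each Δ i is uniform, i.e. μ {ω | Δ i ω = d} = (2^w)⁻¹ for every d. Then for every tuple of targets x : Fin N → ZMod (2^w), μ {ω | ∀ i, Z ω i + Δ i ω = x i} = ((2^w)⁻¹)^N. -/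
/-!
Condition on the value `z` of the nominal vector `Z`, which takes finitely many values. On `{Z = z}`
the event is `{∀ i, Δ i = x i - z i}`, so joint independence and uniformity give
`μ {Z = z} * ((2 ^ w)⁻¹) ^ N`. The second factor does not depend on `z`, and the first sums to `1`.
-/

open MeasureTheory ProbabilityTheory
open scoped ENNReal

/-- The family of codomains indexed by `Option (Fin N)`: `none` indexes the nominal
vector of `N` machine words, `some i` indexes the `i`-th compiler delta. -/
def TraceFam (w N : ℕ) : Option (Fin N) → Type :=
  fun o => match o with
  | none => Fin N → ZMod (2 ^ w)
  | some _ => ZMod (2 ^ w)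

instance TraceFam.instMeasurableSpace (w N : ℕ) (o : Option (Fin N)) :
    MeasurableSpace (TraceFam w N o) :=
  match o with
  | none => inferInstanceAs (MeasurableSpace (Fin N → ZMod (2 ^ w)))
  | some _ => inferInstanceAs (MeasurableSpace (ZMod (2 ^ w)))

/-- The probabilistic content of the paper's Theorem 1: if `N` observed trace values are
each the nominal value `Z · i` offset by a compiler delta `Δ i`, where the deltas are
uniform and the whole family (the nominal vector `Z` together with all deltas, indexed
over `Option (Fin N)`) is jointly independent, then any prescribed tuple of `N` observed
`w`-bit values has probability `(2^w)⁻¹ ^ N`. -/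
theorem joint_independent_uniform_deltas
    {Ω : Type*} [MeasurableSpace Ω] (μ : Measure Ω) [IsProbabilityMeasure μ]
    (w N : ℕ) (hw : 1 ≤ w) (hN : 1 ≤ N)
    (Z : Ω → (Fin N → ZMod (2 ^ w))) (hZ : Measurable Z)
    (Δ : Fin N → Ω → ZMod (2 ^ w)) (hΔ : ∀ i, Measurable (Δ i))
    (hindep :
      iIndepFun (m := fun o => TraceFam.instMeasurableSpace w N o)
        (fun o : Option (Fin N) =>
          (match o with
            | none => Z
            | some i => Δ i : Ω → TraceFam w N o))
        μ)
    (hunif : ∀ (i : Fin N) (d : ZMod (2 ^ w)),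
      μ {ω | Δ i ω = d} = ((2 : ℝ≥0∞) ^ w)⁻¹)
    (x : Fin N → ZMod (2 ^ w)) :
    μ {ω | ∀ i, Z ω i + Δ i ω = x i} = (((2 : ℝ≥0∞) ^ w)⁻¹) ^ N := by
  -- `Fintype (ZMod (2 ^ w))` requires `2 ^ w ≠ 0`.
  have : NeZero (2 ^ w) := ⟨by positivity⟩
  have key : ∀ z : Fin N → ZMod (2 ^ w),
      μ ({ω | ∀ i, Z ω i + Δ i ω = x i} ∩ Z ⁻¹' {z})
        = μ (Z ⁻¹' {z}) * (((2 : ℝ≥0∞) ^ w)⁻¹) ^ N := by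
    intro z
    -- On `{Z = z}` the event is the cylinder `{∀ i, Δ i = x i - z i}`.
    have h := hindep.measure_inter_preimage_eq_mul Finset.univ
      (sets := fun o => match o with
        | none => ({z} : Set (Fin N → ZMod (2 ^ w)))
        | some i => ({x i - z i} : Set (ZMod (2 ^ w))))
      (by
        rintro (_ | i) -
        · exact measurableSet_singleton z
        · exact measurableSet_singleton (x i - z i))
    rw [Fintype.prod_option] at h
    have hd : ∏ i, μ (Δ i ⁻¹' {x i - z i}) = (((2 : ℝ≥0∞) ^ w)⁻¹) ^ N := by
      refine (Finset.prod_congr rfl fun i _ => hunif i (x i - z i)).trans ?_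
      simp
    rw [← hd]
    refine Eq.trans ?_ h
    congr 1
    ext ω
    simp only [Set.mem_inter_iff, Set.mem_iInter, Option.forall, Finset.mem_univ,
      forall_true_left, Set.mem_ofPred_eq]
    change ((∀ i, Z ω i + Δ i ω = x i) ∧ Z ω = z) ↔ (Z ω = z ∧ ∀ i, Δ i ω = x i - z i)
    constructor
    · rintro ⟨h1, rfl⟩
      exact ⟨rfl, fun i => eq_sub_of_add_eq' (h1 i)⟩
    · rintro ⟨rfl, h1⟩
      exact ⟨fun i => by rw [h1 i]; ring, rfl⟩
  have hfib : ∀ z, MeasurableSet (Z ⁻¹' {z}) := fun z => hZ (measurableSet_singleton z)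
  -- Both the event and `Ω` split along the finitely many fibres of `Z`.
  have split : ∀ A : Set Ω, ∑ z, μ (A ∩ Z ⁻¹' {z}) = μ A := by
    intro A
    have := sum_measure_preimage_singleton (μ := μ.restrict A) (f := Z) Finset.univ
      (fun z _ => hfib z)
    simpa [Measure.restrict_apply (hfib _), Set.inter_comm] using this
  have total : ∑ z, μ (Z ⁻¹' {z}) = 1 := by
    simpa using split Set.univ
  rw [← split, Finset.sum_congr rfl fun z _ => key z, ← Finset.sum_mul, total, one_mul]
end

section
/- Let (Ω, μ) be a probability space, n ≥ 1, m ≥ 1. Let Δ : Fin m → Ω → ZMod (2^n) be measurable random variables that are jointly independent (ProbabilityTheory.iIndepFun) and each uniform, i.e. μ {ω | Δ i ω = d} = (2^n)⁻¹ for every d. For each i : Fin m let F i : (Fin i.val → ZMod (2^n)) → ZMod (2^n) be an arbitrary function, and define random variables X i : Ω → ZMod (2^n) by strong recursion: X i ω = F i (fun j : Fin i.val => X ⟨j.val, j.val.lt_of_lt_of_le (le_of_lt i.isLt) ▸ (j.isLt.trans i.isLt)⟩ ω) + Δ i ω (each X i is the value computed from the earlier trace entries plus a fresh delta). Then the joint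 distribution of (X i) is uniform on (Fin m → ZMod (2^n)): for every x : Fin m → ZMod (2^n), μ {ω | ∀ i, X i ω = x i} = ((2^n)⁻¹)^m. -/
open MeasureTheory ProbabilityTheory
open scoped ENNReal

/-!
For a fixed trace `x`, the system `X i = F i (X 0, …, X (i-1)) + Δ i` is triangular, so the event
`∀ i, X i = x i` coincides with the event `∀ i, Δ i = x i - F i (x 0, …, x (i-1))`, whose
right-hand sides are constants. By independence its probability is the product of `m` factors,
each equal to `(2 ^ n)⁻¹` by uniformity.
-/

/-- The paper's Proposition on maximal trace entropy: in a straight-line trace each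
written value `X i` equals an arbitrary function `F i` of the earlier trace entries
plus a fresh, jointly independent, uniformly random compiler delta `Δ i`; then the
whole `m`-word trace is uniformly distributed on `(Fin m → ZMod (2^n))`. -/
theorem straight_line_trace_uniform
    {Ω : Type*} [MeasurableSpace Ω] (μ : Measure Ω) [IsProbabilityMeasure μ]
    (n m : ℕ) (hn : 1 ≤ n) (hm : 1 ≤ m)
    (Δ : Fin m → Ω → ZMod (2 ^ n)) (hΔmeas : ∀ i, Measurable (Δ i))
    (hindep : iIndepFun (m := fun _ => inferInstance) Δ μ)
    (hunif : ∀ (i : Fin m) (d : ZMod (2 ^ n)),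
      μ {ω | Δ i ω = d} = ((2 : ℝ≥0∞) ^ n)⁻¹)
    (F : ∀ i : Fin m, (Fin i.val → ZMod (2 ^ n)) → ZMod (2 ^ n))
    (X : Fin m → Ω → ZMod (2 ^ n))
    (hX : ∀ (i : Fin m) (ω : Ω),
      X i ω =
        F i (fun j : Fin i.val => X ⟨j.val, lt_trans j.isLt i.isLt⟩ ω) + Δ i ω)
    (x : Fin m → ZMod (2 ^ n)) :
    μ {ω | ∀ i, X i ω = x i} = (((2 : ℝ≥0∞) ^ n)⁻¹) ^ m := by
  let d : Fin m → ZMod (2 ^ n) := fun i =>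
    x i - F i (fun j : Fin i.val => x ⟨j.val, lt_trans j.isLt i.isLt⟩)
  have hset : {ω | ∀ i, X i ω = x i} = ⋂ i, Δ i ⁻¹' {d i} := by
    ext ω
    simp only [Set.mem_setOf_eq, Set.mem_iInter, Set.mem_preimage, Set.mem_singleton_iff]
    constructor
    · intro h i
      have hi := hX i ω
      simp only [h] at hi
      exact eq_sub_of_add_eq' hi.symm
    · intro h
      -- Forward substitution: strong induction on the position in the trace.
      have key : ∀ k (hk : k < m), X ⟨k, hk⟩ ω = x ⟨k, hk⟩ := by
        intro k
        induction k using Nat.strong_induction_on with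
        | _ k ih =>
          intro hk
          have hprev : (fun j : Fin k => X ⟨j.val, lt_trans j.isLt hk⟩ ω) =
              fun j : Fin k => x ⟨j.val, lt_trans j.isLt hk⟩ :=
            funext fun j => ih j.val j.isLt _
          rw [hX, h]
          change F ⟨k, hk⟩ (fun j : Fin k => X ⟨j.val, lt_trans j.isLt hk⟩ ω) + _ = _
          rw [hprev]
          exact add_sub_cancel _ _
      exact fun i => key i.val i.isLt
  rw [hset, hindep.meas_iInter fun i => ⟨{d i}, measurableSet_singleton _, rfl⟩]
  have hd : ∀ i, μ (Δ i ⁻¹' {d i}) = ((2 : ℝ≥0∞) ^ n)⁻¹ := fun i => hunif i (d i)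
  simp only [hd, Finset.prod_const, Finset.card_univ, Fintype.card_fin]
end

section
/- For every n ≥ 1 and every constant k : ZMod (2^n), the number of operand pairs (x, y) : ZMod (2^n) × ZMod (2^n) for which the signed comparison test succeeds — i.e., for which the two's-complement interpretation of x − (y + k) is negative, meaning 2^(n−1) ≤ (x − (y + k)).val — equals 2^(2n−1), exactly half of all 2^(2n) pairs. -/
/-! The map `(z, y) ↦ (z + (y + k), y)` is injective and carries `N × ZMod (2 ^ n)` onto the set of
pairs passing the test, where `N` is the set of negative words. Taking representatives identifies
`N` with the interval `[2 ^ (n - 1), 2 ^ n)`, so the count is `2 ^ (n - 1) * 2 ^ n`. -/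

lemma ncard_negative_words (n : ℕ) (hn : 1 ≤ n) :
    Set.ncard {z : ZMod (2 ^ n) | 2 ^ (n - 1) ≤ z.val} = 2 ^ (n - 1) := by
  have himage : ZMod.val '' {z : ZMod (2 ^ n) | 2 ^ (n - 1) ≤ z.val}
      = (Finset.Ico (2 ^ (n - 1)) (2 ^ n) : Finset ℕ) := by
    ext m
    simp only [Set.mem_image, Set.mem_setOf_eq, Finset.coe_Ico, Set.mem_Ico]
    constructor
    · rintro ⟨z, hz, rfl⟩
      exact ⟨hz, ZMod.val_lt z⟩
    · rintro ⟨h₁, h₂⟩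
      have hval : ((m : ZMod (2 ^ n))).val = m := ZMod.val_cast_of_lt h₂
      exact ⟨m, by rw [hval]; exact h₁, hval⟩
  rw [← Set.ncard_image_of_injective _ (ZMod.val_injective (2 ^ n)), himage,
    Set.ncard_coe_finset, Nat.card_Ico]
  obtain ⟨m, rfl⟩ := Nat.exists_eq_add_of_le' hn
  simp only [Nat.add_sub_cancel, pow_succ]
  omega

/-- The paper's claim on the contestable equals: for the signed comparison branch test
`x [<] y + k`, exactly half of all `2^(2n)` operand pairs `(x, y)` make the test
succeed, i.e. make the two's-complement interpretation of `x - (y + k)` negative. -/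
theorem branch_test_half_of_pairs (n : ℕ) (hn : 1 ≤ n) (k : ZMod (2 ^ n)) :
    Set.ncard {p : ZMod (2 ^ n) × ZMod (2 ^ n) |
        2 ^ (n - 1) ≤ (p.1 - (p.2 + k)).val} = 2 ^ (2 * n - 1) := by
  have himage : {p : ZMod (2 ^ n) × ZMod (2 ^ n) | 2 ^ (n - 1) ≤ (p.1 - (p.2 + k)).val}
      = (fun q : ZMod (2 ^ n) × ZMod (2 ^ n) => (q.1 + (q.2 + k), q.2)) ''
        ({z : ZMod (2 ^ n) | 2 ^ (n - 1) ≤ z.val} ×ˢ Set.univ) := by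
    ext ⟨x, y⟩
    constructor
    · intro h
      exact ⟨(x - (y + k), y), ⟨h, trivial⟩, by simp⟩
    · rintro ⟨⟨z, w⟩, ⟨hz, -⟩, h⟩
      simp only [Prod.mk.injEq] at h
      obtain ⟨rfl, rfl⟩ := h
      simpa using hz
  have hinj : Function.Injective
      (fun q : ZMod (2 ^ n) × ZMod (2 ^ n) => (q.1 + (q.2 + k), q.2)) := by
    rintro ⟨a, b⟩ ⟨c, d⟩ h
    simp only [Prod.mk.injEq] at h
    obtain ⟨h, rfl⟩ := h
    rw [add_right_cancel h]
  rw [himage, Set.ncard_image_of_injective _ hinj, Set.ncard_prod, ncard_negative_words n hn,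
    Set.ncard_univ, Nat.card_zmod, ← pow_add]
  congr 1
  omega
end
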